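/- Let P be a disjunctive logic program and let M be an answer set of P. Then Comp(P) ⊆ M, i.e., every answer set of P contains every compulsory atom of P. -/

import Mathlib

/-- A rule of a disjunctive logic program: `head` is the (disjunctive) head,
`pos` the positive body atoms and `neg` the (default-negated) negative body atoms. -/
structure Rule (A : Type) where
  head : Finset A
  pos : Finset A
  neg : Finset A

namespace Rule
variable {A : Type}

/-- A rule is normal if its head contains at most one atom. -/
def isNormal (r : Rule A) : Prop := r.head.card ≤ 1

/-- A rule is disjunctive if its head contains more than one atom. -/
def isDisjunctive (r : Rule A) : Prop := 1 < r.head.card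

/-- A rule is negation-free if its negative body is empty. -/
def negFree (r : Rule A) : Prop := r.neg = ∅

/-- A set `M` of atoms satisfies a (negation-free) rule if, whenever all atoms of the
positive body belong to `M`, some head atom belongs to `M`. -/
def satisfiedBy (r : Rule A) (M : Set A) : Prop :=
  (∀ b ∈ r.pos, b ∈ M) → ∃ a ∈ r.head, a ∈ M

end Rule

/-- The set of atoms occurring in a program. -/
def progAtoms {A : Type} (P : Set (Rule A)) : Set A :=
  {a | ∃ r ∈ P, a ∈ r.head ∨ a ∈ r.pos ∨ a ∈ r.neg}

/-- `M` is a model of the (negation-free) program `P`. -/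
def isModel {A : Type} (P : Set (Rule A)) (M : Set A) : Prop :=
  ∀ r ∈ P, r.satisfiedBy M

/-- `M` is a minimal model of the (negation-free) program `P`. -/
def isMinimalModel {A : Type} (P : Set (Rule A)) (M : Set A) : Prop :=
  isModel P M ∧ ∀ M' : Set A, M' ⊂ M → ¬ isModel P M'

/-- The GL reduct of `P` with respect to `M`: remove every rule whose negative body
meets `M`, and delete the negative bodies of the remaining rules. -/
def reduct {A : Type} (P : Set (Rule A)) (M : Set A) : Set (Rule A) :=
  {r' | ∃ r ∈ P, (∀ c ∈ r.neg, c ∉ M) ∧ r' = ⟨r.head, r.pos, ∅⟩}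

/-- An answer set of `P` is a set `M ⊆ Atoms(P)` that is a subset-minimal model
of the reduct `P^M`. -/
def isAnswerSet {A : Type} (P : Set (Rule A)) (M : Set A) : Prop :=
  M ⊆ progAtoms P ∧ isMinimalModel (reduct P M) M

/-- The compulsory atoms `Comp(P)`: the smallest set of atoms such that (i) if
`(w ← not w)` is a rule of `P` then `w` is compulsory, and (ii) if `(b ← a₁,…,aₙ)`
is a normal negation-free rule of `P` all of whose body atoms are compulsory,
then `b` is compulsory. -/
inductive Compulsory {A : Type} (P : Set (Rule A)) : A → Prop
  | loop (w : A) : (⟨{w}, ∅, {w}⟩ : Rule A) ∈ P → Compulsory P w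
  | rule (r : Rule A) (b : A) : r ∈ P → r.head = {b} → r.neg = ∅ →
      (∀ a ∈ r.pos, Compulsory P a) → Compulsory P b

/-- The contingent atoms `Cont(P) = Atoms(P) ∖ Comp(P)`. -/
def ContingentAtoms {A : Type} (P : Set (Rule A)) : Set A :=
  progAtoms P \ {a | Compulsory P a}

/-- A rule of `P` is contingent if its head contains a contingent atom. -/
def isContingentRule {A : Type} (P : Set (Rule A)) (r : Rule A) : Prop :=
  r ∈ P ∧ ∃ a ∈ r.head, a ∈ ContingentAtoms P

namespace Rule

theorem satisfiedBy_iff_of_head_eq_singleton {A : Type} {r : Rule A} {b : A}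
    (hr : r.head = {b}) (M : Set A) :
    r.satisfiedBy M ↔ ((∀ a ∈ r.pos, a ∈ M) → b ∈ M) := by
  simp only [satisfiedBy, hr, Finset.mem_singleton, exists_eq_left]

end Rule

section Reduct

variable {A : Type} {P : Set (Rule A)} {M : Set A}

theorem isModel_reduct_iff {N : Set A} :
    isModel (reduct P M) N ↔ ∀ r ∈ P, (∀ c ∈ r.neg, c ∉ M) → r.satisfiedBy N := by
  constructor
  · intro hN r hr hneg
    exact hN ⟨r.head, r.pos, ∅⟩ ⟨r, hr, hneg, rfl⟩
  · rintro hN _ ⟨r, hr, hneg, rfl⟩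
    exact hN r hr hneg

theorem mem_of_isModel_reduct_of_head_eq_singleton (hM : isModel (reduct P M) M)
    {r : Rule A} {b : A} (hr : r ∈ P) (hhead : r.head = {b})
    (hneg : ∀ c ∈ r.neg, c ∉ M) (hpos : ∀ a ∈ r.pos, a ∈ M) : b ∈ M :=
  (Rule.satisfiedBy_iff_of_head_eq_singleton hhead M).1
    (isModel_reduct_iff.1 hM r hr hneg) hpos

theorem mem_of_isModel_reduct_of_loop_mem (hM : isModel (reduct P M) M) {w : A}
    (hw : (⟨{w}, ∅, {w}⟩ : Rule A) ∈ P) : w ∈ M := by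
  -- If `w ∉ M`, the rule survives in the reduct as the fact `w ←`, which forces `w ∈ M`.
  by_contra hwM
  have hneg : ∀ c ∈ ({w} : Finset A), c ∉ M := by
    simpa only [Finset.mem_singleton, forall_eq] using hwM
  have hpos : ∀ a ∈ (∅ : Finset A), a ∈ M := by simp
  exact hwM (mem_of_isModel_reduct_of_head_eq_singleton hM hw rfl hneg hpos)

theorem statement11_general (hM : isModel (reduct P M) M) {a : A} (ha : Compulsory P a) :
    a ∈ M := by
  induction ha with
  | loop w hw => exact mem_of_isModel_reduct_of_loop_mem hM hw
  | rule r b hr hhead hneg _ ih =>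
    have hneg_M : ∀ c ∈ r.neg, c ∉ M := by simp [hneg]
    exact mem_of_isModel_reduct_of_head_eq_singleton hM hr hhead hneg_M ih

end Reduct

/-- Every answer set of a disjunctive logic program contains every compulsory atom. -/
theorem statement11 {A : Type} (P : Set (Rule A)) (hfin : P.Finite)
    (M : Set A) (hM : isAnswerSet P M) :
    ∀ a : A, Compulsory P a → a ∈ M :=
  fun _ ha => statement11_general hM.2.1 ha
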